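/- arXiv:0904.4283 — 2 statements merged into one kernel-verified Lean document; each statement's English description precedes it below -/
import Mathlib

section
/- Let h₁, h₂, h₃, … be independent random vectors in ℂ^L with h₂, h₃, … identically distributed, P(h₁ = 0) = 0, and 0 in the topological support of the common law of h₂. Define β_K := min_{2 ≤ k ≤ K+1} |⟨h_k, h₁⟩|² / ‖h₁‖². Then for every ε > 0, lim_{K→∞} P( β_K > ε ) = 0, i.e., β_K converges to 0 in probability. -/
open MeasureTheory ProbabilityTheory Filter

/-- Equip `ℂ^L` with its Borel σ-algebra. -/
noncomputable instance (L : ℕ) : MeasurableSpace (EuclideanSpace ℂ (Fin L)) := borel _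
instance (L : ℕ) : BorelSpace (EuclideanSpace ℂ (Fin L)) := ⟨rfl⟩

/-- Convergence in probability of the interference power.  Let `h 0, h 1, h 2, …` be
independent random vectors in `ℂ^L` (here `h 0` plays the role of the primary channel
`h₁` of the paper and `h k`, `k ≥ 1`, the identically distributed candidate channels
`h₂, h₃, …`), with `P(h 0 = 0) = 0` and `0` in the topological support of the common
law of the candidates.  With `β_K := min_{1 ≤ k ≤ K} ‖⟨h k, h 0⟩‖² / ‖h 0‖²`, for every
`ε > 0` one has `P(β_K > ε) → 0` as `K → ∞`, i.e. `β_K → 0` in probability. -/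
theorem oso_interference_power_tendsto_zero_in_probability
    {Ω : Type*} [MeasurableSpace Ω] (μ : Measure Ω) [IsProbabilityMeasure μ]
    (L : ℕ) (h : ℕ → Ω → EuclideanSpace ℂ (Fin L))
    (hmeas : ∀ k, Measurable (h k))
    (hindep : iIndepFun h μ)
    (hprim : μ {ω | h 0 ω = 0} = 0)
    (hident : ∀ k, 1 ≤ k → Measure.map (h k) μ = Measure.map (h 1) μ)
    (hsupp : ∀ U : Set (EuclideanSpace ℂ (Fin L)), IsOpen U →
      (0 : EuclideanSpace ℂ (Fin L)) ∈ U → 0 < Measure.map (h 1) μ U) :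
    ∀ ε : ℝ, 0 < ε →
      Tendsto (fun K : ℕ => μ {ω | ε < sInf ((fun k =>
          ‖(inner ℂ (h k ω) (h 0 ω) : ℂ)‖ ^ 2 / ‖h 0 ω‖ ^ 2) '' Set.Icc 1 K)})
        atTop (nhds 0) := by
  intro ε hε
  set V : Set (EuclideanSpace ℂ (Fin L)) := {x | ε < ‖x‖ ^ 2} with hV
  have hVc : IsClosed {x : EuclideanSpace ℂ (Fin L) | ε ≤ ‖x‖ ^ 2} :=
    isClosed_le continuous_const (by fun_prop)
  have hVm : MeasurableSet V :=
    (isOpen_lt continuous_const (by fun_prop : Continuous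
      fun x : EuclideanSpace ℂ (Fin L) => ‖x‖ ^ 2)).measurableSet
  have : IsProbabilityMeasure (Measure.map (h 1) μ) :=
    Measure.isProbabilityMeasure_map (hmeas 1).aemeasurable
  have hp : Measure.map (h 1) μ V < 1 := by
    refine lt_of_le_of_ne prob_le_one fun h1 => ?_
    have h2 : Measure.map (h 1) μ Vᶜ = 0 := (prob_compl_eq_zero_iff hVm).2 h1
    have h3 := hsupp _ hVc.isOpen_compl (by simpa using hε)
    refine h3.ne' (measure_mono_null ?_ h2)
    intro x hx hx'
    have hx2 : ε < ‖x‖ ^ 2 := hx'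
    exact hx (show ε ≤ ‖x‖ ^ 2 from hx2.le)
  refine tendsto_of_tendsto_of_tendsto_of_le_of_le tendsto_const_nhds
    (ENNReal.tendsto_pow_atTop_nhds_zero_of_lt_one hp) (fun _ => zero_le) ?_
  intro K
  have hsub : {ω | ε < sInf ((fun k =>
          ‖(inner ℂ (h k ω) (h 0 ω) : ℂ)‖ ^ 2 / ‖h 0 ω‖ ^ 2) '' Set.Icc 1 K)} ⊆
      ⋂ k ∈ Finset.Icc 1 K, h k ⁻¹' V := by
    intro ω hω
    simp only [Set.mem_iInter, Finset.mem_Icc]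
    intro k hk
    have h1 : sInf ((fun k =>
          ‖(inner ℂ (h k ω) (h 0 ω) : ℂ)‖ ^ 2 / ‖h 0 ω‖ ^ 2) '' Set.Icc 1 K) ≤
          ‖(inner ℂ (h k ω) (h 0 ω) : ℂ)‖ ^ 2 / ‖h 0 ω‖ ^ 2 := by
      refine csInf_le ⟨0, ?_⟩ ⟨k, hk, rfl⟩
      rintro _ ⟨j, _, rfl⟩
      positivity
    have h2 : ‖(inner ℂ (h k ω) (h 0 ω) : ℂ)‖ ^ 2 / ‖h 0 ω‖ ^ 2 ≤ ‖h k ω‖ ^ 2 := by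
      refine div_le_of_le_mul₀ (by positivity) (by positivity) ?_
      rw [← mul_pow]
      exact pow_le_pow_left₀ (norm_nonneg _) (norm_inner_le_norm _ _) 2
    exact lt_of_lt_of_le hω (h1.trans h2)
  refine (measure_mono hsub).trans ?_
  rw [hindep.measure_inter_preimage_eq_mul (Finset.Icc 1 K) (fun _ _ => hVm)]
  have h4 : ∀ k ∈ Finset.Icc 1 K, μ (h k ⁻¹' V) = Measure.map (h 1) μ V := by
    intro k hk
    rw [← hident k (Finset.mem_Icc.1 hk).1, Measure.map_apply (hmeas k) hVm]
  rw [Finset.prod_congr rfl h4]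
  simp
end

section
/- Let h₁, h₂, h₃, … be independent, identically distributed random vectors in ℂ^L whose common law has full topological support (every nonempty open subset of ℂ^L has positive probability) and no atom at 0 (P(h₁ = 0) = 0). Define β_K := min_{2 ≤ k ≤ K+1} |⟨h_k, h₁⟩|² / ‖h₁‖². Then β_K converges to 0 almost surely as K → ∞. -/
open MeasureTheory ProbabilityTheory Filter

/-- Lemma 1 of the OSO paper in its working (i.i.d., full-support) model.  Let
`h 0, h 1, h 2, …` be i.i.d. random vectors in `ℂ^L` (here `h 0` plays the role of the
primary channel `h₁` of the paper and `h k`, `k ≥ 1`, the candidate channels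
`h₂, h₃, …`) whose common law has full topological support (every nonempty open set has
positive probability) and no atom at `0` (i.e. `P(h 0 = 0) = 0`).  Then the interference
power `β_K := min_{1 ≤ k ≤ K} ‖⟨h k, h 0⟩‖² / ‖h 0‖²` converges to `0` almost surely as
`K → ∞`. -/
theorem oso_interference_power_tendsto_zero_ae_iid_full_support
    {Ω : Type*} [MeasurableSpace Ω] (μ : Measure Ω) [IsProbabilityMeasure μ]
    (L : ℕ) (h : ℕ → Ω → EuclideanSpace ℂ (Fin L))
    (hmeas : ∀ k, Measurable (h k))
    (hindep : iIndepFun h μ)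
    (hident : ∀ k, Measure.map (h k) μ = Measure.map (h 0) μ)
    (hsupp : ∀ U : Set (EuclideanSpace ℂ (Fin L)), IsOpen U → U.Nonempty →
      0 < Measure.map (h 0) μ U)
    (hprim : μ {ω | h 0 ω = 0} = 0) :
    ∀ᵐ ω ∂μ, Tendsto
      (fun K : ℕ =>
        sInf ((fun k => ‖(inner ℂ (h k ω) (h 0 ω) : ℂ)‖ ^ 2 / ‖h 0 ω‖ ^ 2) '' Set.Icc 1 K))
      atTop (nhds 0) := by
  have key : ∀ n : ℕ, ∀ᵐ ω ∂μ, ∃ᶠ k in atTop, h k ω ∈ Metric.ball 0 (1 / ((n : ℝ) + 1)) := by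
    intro n
    have hr : (0 : ℝ) < 1 / ((n : ℝ) + 1) := by positivity
    set B : Set (EuclideanSpace ℂ (Fin L)) := Metric.ball 0 (1 / ((n : ℝ) + 1)) with hB
    have hBo : IsOpen B := Metric.isOpen_ball
    have hBm : MeasurableSet B := hBo.measurableSet
    have hpos := hsupp B hBo ⟨0, Metric.mem_ball_self hr⟩
    have hm : ∀ k, MeasurableSet (h k ⁻¹' B) := fun k => hmeas k hBm
    have hμ : ∀ k, μ (h k ⁻¹' B) = Measure.map (h 0) μ B := fun k => by
      rw [← hident k, Measure.map_apply (hmeas k) hBm]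
    have hind : iIndepSet (fun k => h k ⁻¹' B) μ := by
      rw [iIndepSet_iff_meas_biInter hm]
      intro S
      exact hindep.measure_inter_preimage_eq_mul S (fun _ _ => hBm)
    have h1 : μ (limsup (fun k => h k ⁻¹' B) atTop) = 1 := by
      refine measure_limsup_eq_one hm hind ?_
      simp only [hμ]
      exact ENNReal.tsum_const_eq_top_of_ne_zero hpos.ne'
    have h2 : ∀ᵐ ω ∂μ, ω ∈ limsup (fun k => h k ⁻¹' B) atTop :=
      (mem_ae_iff_prob_eq_one (MeasurableSet.measurableSet_limsup hm)).2 h1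
    filter_upwards [h2] with ω hω
    rwa [mem_limsup_iff_frequently_mem] at hω
  filter_upwards [ae_all_iff.2 key] with ω hω
  set f : ℕ → ℝ := fun k => ‖(inner ℂ (h k ω) (h 0 ω) : ℂ)‖ ^ 2 / ‖h 0 ω‖ ^ 2 with hf
  have hf0 : ∀ k, 0 ≤ f k := fun k => by positivity
  have hfle : ∀ k, f k ≤ ‖h k ω‖ ^ 2 := fun k => by
    refine div_le_of_le_mul₀ (by positivity) (by positivity) ?_
    rw [← mul_pow]
    exact pow_le_pow_left₀ (norm_nonneg _) (norm_inner_le_norm _ _) 2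
  rw [Metric.tendsto_atTop]
  intro ε hε
  obtain ⟨n, hn⟩ := exists_nat_one_div_lt hε
  obtain ⟨k, hk1, hk⟩ := (frequently_atTop.1 (hω n)) 1
  refine ⟨k, fun K hK => ?_⟩
  have hnn : 0 ≤ sInf (f '' Set.Icc 1 K) := by
    apply Real.sInf_nonneg
    rintro _ ⟨j, _, rfl⟩
    exact hf0 j
  rw [Real.dist_eq, sub_zero, abs_of_nonneg hnn]
  have hle : sInf (f '' Set.Icc 1 K) ≤ f k := by
    refine csInf_le ⟨0, ?_⟩ ⟨k, ⟨hk1, hK⟩, rfl⟩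
    rintro _ ⟨j, _, rfl⟩
    exact hf0 j
  rw [mem_ball_zero_iff] at hk
  have hone : 1 / ((n : ℝ) + 1) ≤ 1 := by
    rw [div_le_one (by positivity)]
    linarith [(Nat.cast_nonneg n : (0 : ℝ) ≤ n)]
  have := hfle k
  nlinarith [norm_nonneg (h k ω)]
end
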